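/- The function w_k(x) = Σ_{l=1}^∞ (3^k/(3^{k−1}+1))^l · χ_{Ω_l}(x) satisfies ∫_{[0,1]} w_k dx = 1, and for every l ≥ 1, every I ∈ ℐ_l, and every J ∈ 𝒥_{l+1}, one has ∫_I w_k dx = ∫_J w_k dx. -/

import Mathlib

open MeasureTheory Set Filter Topology
open scoped ENNReal

noncomputable section

namespace RT

/-- The Hilbert transform `Hf(x)`, defined as the principal-value limit
`lim_{ε→0⁺} ∫_{|x-y|>ε} f(y)/(x-y) dy` (junk value at points where the limit
does not exist). -/
def Hil (f : ℝ → ℝ) (x : ℝ) : ℝ :=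
  limUnder (𝓝[>] (0 : ℝ)) fun ε => ∫ y in {y : ℝ | ε < |x - y|}, f y / (x - y)

/-- The (uncentered) Hardy–Littlewood maximal function over bounded intervals:
`Mf(x) = sup_{I ∋ x} (1/|I|) ∫_I |f|`. -/
def HLMax (f : ℝ → ℝ) (x : ℝ) : ℝ≥0∞ :=
  ⨆ (a : ℝ) (b : ℝ) (_ : a < b) (_ : x ∈ Icc a b),
    (ENNReal.ofReal (b - a))⁻¹ * ∫⁻ y in Ioo a b, ENNReal.ofReal |f y|

/-- `M_r f = (M(|f|^r))^{1/r}`. -/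
def Mr (r : ℝ) (f : ℝ → ℝ) (x : ℝ) : ℝ≥0∞ :=
  HLMax (fun y => |f y| ^ r) x ^ (1 / r)

/-- The Orlicz maximal operator
`M_Φ f(x) = sup_{I ∋ x} inf {λ > 0 : (1/|I|) ∫_I Φ(|f|/λ) ≤ 1}`. -/
def MOrlicz (Φ : ℝ → ℝ) (f : ℝ → ℝ) (x : ℝ) : ℝ≥0∞ :=
  ⨆ (a : ℝ) (b : ℝ) (_ : a < b) (_ : x ∈ Icc a b),
    sInf {lam : ℝ≥0∞ | ∃ l : ℝ, 0 < l ∧ lam = ENNReal.ofReal l ∧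
      (∫⁻ y in Ioo a b, ENNReal.ofReal (Φ (|f y| / l))) ≤ ENNReal.ofReal (b - a)}

/-- The centered maximal operator with respect to a weight `v`:
`M^c_v h(x) = sup_{ρ>0} (1/v(B(x,ρ))) ∫_{B(x,ρ)} |h| v`. -/
def Mc (v h : ℝ → ℝ) (x : ℝ) : ℝ≥0∞ :=
  ⨆ (ρ : ℝ) (_ : 0 < ρ),
    (∫⁻ y in Ioo (x - ρ) (x + ρ), ENNReal.ofReal (v y))⁻¹ *
      ∫⁻ y in Ioo (x - ρ) (x + ρ), ENNReal.ofReal |h y| * ENNReal.ofReal (v y)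

/-- A Young function: convex, increasing, `Φ(0) = 0`, `Φ(t)/t → ∞`. -/
structure IsYoung (Φ : ℝ → ℝ) : Prop where
  convexOn : ConvexOn ℝ (Ici 0) Φ
  mono : MonotoneOn Φ (Ici 0)
  map_zero : Φ 0 = 0
  superlinear : Tendsto (fun t => Φ t / t) atTop atTop

/-- A weight: a nonnegative locally integrable function on `ℝ`. -/
def IsWeight (w : ℝ → ℝ) : Prop :=
  (∀ x, 0 ≤ w x) ∧ LocallyIntegrable w volume

/-! Triadic machinery: intervals are represented by their endpoint pairs,
`(a, b)` corresponding to `[a, b)`. -/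

/-- The length of the interval. -/
def len (I : ℝ × ℝ) : ℝ := I.2 - I.1

/-- The set `[a, b)` of the interval `I = (a, b)`. -/
def ivl (I : ℝ × ℝ) : Set ℝ := Ico I.1 I.2

/-- A triadic interval `[3^j n, 3^j (n+1))`, `j, n ∈ ℤ`. -/
def IsTriadic (I : ℝ × ℝ) : Prop :=
  ∃ j n : ℤ, I.1 = (3 : ℝ) ^ j * n ∧ I.2 = (3 : ℝ) ^ j * (n + 1)

/-- The middle third `I^Δ` of `I`: same center, one third of the length. -/
def mid (I : ℝ × ℝ) : ℝ × ℝ := (I.1 + (I.2 - I.1) / 3, I.2 - (I.2 - I.1) / 3)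

/-- `P` assigns to each triadic interval `J ⊆ [0,1)` a triadic interval
adjacent to `J^Δ` (on its left or on its right) with `|P J| = 3^{-k} |J|`. -/
def GoodP (k : ℕ) (P : ℝ × ℝ → ℝ × ℝ) : Prop :=
  ∀ J : ℝ × ℝ, IsTriadic J → ivl J ⊆ Ico (0 : ℝ) 1 →
    IsTriadic (P J) ∧ len (P J) = len J / 3 ^ k ∧
      ((P J).2 = (mid J).1 ∨ (P J).1 = (mid J).2)

/-- The families `𝒥_l`: `𝒥_1 = {[0,1)}`, and `𝒥_{l+1}` consists of the `3^{k-1}`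
triadic subintervals of `J^Δ` of length `|J|/3^k`, for each `J ∈ 𝒥_l`.
(`𝒥_0` is empty.) -/
def Jfam (k : ℕ) : ℕ → Set (ℝ × ℝ)
  | 0 => ∅
  | 1 => {((0 : ℝ), (1 : ℝ))}
  | l + 2 => {J' | IsTriadic J' ∧ ∃ J ∈ Jfam k (l + 1),
      len J' = len J / 3 ^ k ∧ ivl J' ⊆ ivl (mid J)}

/-- The families `ℐ_l = {P J : J ∈ 𝒥_l}`. -/
def Ifam (k : ℕ) (P : ℝ × ℝ → ℝ × ℝ) (l : ℕ) : Set (ℝ × ℝ) :=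
  P '' Jfam k l

/-- `Ω_l = ⋃_{I ∈ ℐ_l} I`. -/
def Omega (k : ℕ) (P : ℝ × ℝ → ℝ × ℝ) (l : ℕ) : Set ℝ :=
  ⋃ I ∈ Ifam k P l, ivl I

/-- The constant `3^k / (3^{k-1} + 1)`. -/
def alpha (k : ℕ) : ℝ := 3 ^ k / (3 ^ (k - 1) + 1)

/-- The Reguera–Thiele weight
`w_k = ∑_{l=1}^∞ (3^k/(3^{k-1}+1))^l χ_{Ω_l}`. -/
def wk (k : ℕ) (P : ℝ × ℝ → ℝ × ℝ) (x : ℝ) : ℝ :=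
  ∑' l : ℕ, alpha k ^ (l + 1) * (Omega k P (l + 1)).indicator (fun _ => (1 : ℝ)) x

/-!
Each `P J` lies in `J ∖ J^Δ`, while all later generations inside `J` live in `J^Δ`; hence the sets
`Ω_l` are pairwise disjoint and their masses inside an interval can be counted. Put `N = 3^{k-1}`.
An interval `J ∈ 𝒥_{m+1}` has length `3^{-km}` and contains `N^j` intervals of `𝒥_{j+m+1}`, so
`Ω_{j+m+1}` contributes `(3^k / (N+1))^{j+m+1} · N^j · 3^{-k(j+m+1)} = N^j / (N+1)^{j+m+1}` to
`∫_J w_k`. Summing the geometric series gives `∫_J w_k = (N+1)^{-m}`. On `I ∈ ℐ_m` only `Ω_m`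
contributes, and the integral is `(3^k / (N+1))^m · 3^{-km} = (N+1)^{-m}` as well.
-/

lemma hasSum_inv_add_one_pow_mul_pow {N : ℝ} (hN : 0 ≤ N) (m : ℕ) :
    HasSum (fun j : ℕ => (N + 1)⁻¹ ^ (j + m + 1) * N ^ j) ((N + 1)⁻¹ ^ m) := by
  have hratio : N / (N + 1) < 1 := (div_lt_one (by positivity)).2 (lt_add_one N)
  have hsum : (N + 1)⁻¹ ^ (m + 1) * (1 - N / (N + 1))⁻¹ = (N + 1)⁻¹ ^ m := by
    have hcompl : 1 - N / (N + 1) = (N + 1)⁻¹ := by field_simp; ring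
    rw [hcompl, pow_succ, mul_assoc, mul_inv_cancel₀ (by positivity), mul_one]
  have hterm (j : ℕ) :
      (N + 1)⁻¹ ^ (m + 1) * (N / (N + 1)) ^ j = (N + 1)⁻¹ ^ (j + m + 1) * N ^ j := by
    rw [div_eq_mul_inv, mul_pow]; ring
  simpa only [hsum, hterm] using
    (hasSum_geometric_of_lt_one (by positivity) hratio).mul_left ((N + 1)⁻¹ ^ (m + 1))

lemma setIntegral_tsum_const_mul_indicator_one {X ι : Type*} [MeasurableSpace X] [Countable ι]
    {μ : Measure X} {A : Set X} (hA : μ A ≠ ∞) {S : ι → Set X} (hS : ∀ i, MeasurableSet (S i))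
    {c : ι → ℝ} {s : ℝ} (hs : HasSum (fun i => c i * μ.real (S i ∩ A)) s) :
    ∫ x in A, ∑' i, c i * (S i).indicator (fun _ => (1 : ℝ)) x ∂μ = s := by
  have : IsFiniteMeasure (μ.restrict A) := isFiniteMeasure_restrict.2 hA
  have hint (i : ι) :
      Integrable (fun x => c i * (S i).indicator (fun _ => (1 : ℝ)) x) (μ.restrict A) :=
    ((integrable_const 1).indicator (hS i)).const_mul _
  have hval (a : ℝ) (i : ι) :
      ∫ x in A, a * (S i).indicator (fun _ => (1 : ℝ)) x ∂μ = a * μ.real (S i ∩ A) := by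
    rw [integral_const_mul, integral_indicator_const _ (hS i), measureReal_restrict_apply (hS i),
      smul_eq_mul, mul_one]
  have hnorm (i : ι) :
      ∫ x in A, ‖c i * (S i).indicator (fun _ => (1 : ℝ)) x‖ ∂μ = |c i * μ.real (S i ∩ A)| := by
    simp only [norm_mul, norm_indicator_eq_indicator_norm, norm_one, Real.norm_eq_abs, hval,
      abs_mul, abs_of_nonneg measureReal_nonneg]
  have hsum := hasSum_integral_of_summable_integral_norm hint
    (by simpa only [hnorm] using hs.summable.abs)
  simp only [hval] at hsum
  exact hsum.unique hs

lemma measureReal_Ico_eq_sum_range {X : Type*} [LinearOrder X] [TopologicalSpace X]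
    [OrderClosedTopology X] [CompactIccSpace X] [MeasurableSpace X] [OpensMeasurableSpace X]
    {μ : Measure X} [IsLocallyFiniteMeasure μ] {f : ℕ → X} (hf : Monotone f) (n : ℕ) :
    μ.real (Ico (f 0) (f n)) = ∑ i ∈ Finset.range n, μ.real (Ico (f i) (f (i + 1))) := by
  induction n with
  | zero => simp
  | succ n ih =>
    rw [Finset.sum_range_succ, ← ih,
      ← Ico_union_Ico_eq_Ico (hf n.zero_le) (hf n.le_succ),
      measureReal_union (Ico_disjoint_Ico_same ..) measurableSet_Ico
        measure_Ico_lt_top.ne measure_Ico_lt_top.ne]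

section Interval

variable {I J : ℝ × ℝ}

lemma measurableSet_ivl (I : ℝ × ℝ) : MeasurableSet (ivl I) := measurableSet_Ico

lemma volume_ivl_ne_top (I : ℝ × ℝ) : volume (ivl I) ≠ ∞ := measure_Ico_lt_top.ne

lemma volume_real_ivl (hI : 0 ≤ len I) : volume.real (ivl I) = len I :=
  Real.volume_real_Ico_of_le (sub_nonneg.1 hI)

lemma len_mid (J : ℝ × ℝ) : len (mid J) = len J / 3 := by
  simp only [len, mid]; ring

lemma ivl_mid_subset (hJ : 0 ≤ len J) : ivl (mid J) ⊆ ivl J := by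
  simp only [len] at hJ
  exact Ico_subset_Ico (by simp only [mid]; linarith) (by simp only [mid]; linarith)

lemma ivl_subset_sdiff_ivl_mid (hlen : len I ≤ len J / 3)
    (hadj : I.2 = (mid J).1 ∨ I.1 = (mid J).2) : ivl I ⊆ ivl J \ ivl (mid J) := by
  rintro x ⟨hx₁, hx₂⟩
  constructor
  · simp only [len, mid] at hlen hadj
    rcases hadj with hleft | hright <;> constructor <;> linarith
  · rintro ⟨hmid₁, hmid₂⟩
    rcases hadj with hleft | hright
    · exact (hx₂.trans_eq hleft).not_ge hmid₁
    · exact (hright.ge.trans hx₁).not_gt hmid₂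

end Interval

namespace IsTriadic

variable {I J : ℝ × ℝ}

lemma len_pos (hI : IsTriadic I) : 0 < len I := by
  obtain ⟨j, n, h₁, h₂⟩ := hI
  have : len I = 3 ^ j := by rw [len, h₁, h₂]; ring
  rw [this]; positivity

protected lemma mid (hJ : IsTriadic J) : IsTriadic (mid J) := by
  obtain ⟨j, n, h₁, h₂⟩ := hJ
  refine ⟨j - 1, 3 * n + 1, ?_, ?_⟩ <;>
  · simp only [RT.mid, h₁, h₂, zpow_sub_one₀ (three_ne_zero' ℝ)]; push_cast; ring

lemma eq_of_mem_ivl (hI : IsTriadic I) (hJ : IsTriadic J) (hlen : len I = len J) {x : ℝ}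
    (hxI : x ∈ ivl I) (hxJ : x ∈ ivl J) : I = J := by
  obtain ⟨i, n, hI₁, hI₂⟩ := hI
  obtain ⟨j, n', hJ₁, hJ₂⟩ := hJ
  obtain rfl : i = j := by
    refine zpow_right_injective₀ (a := (3 : ℝ)) (by norm_num) (by norm_num) ?_
    simp only [len, hI₁, hI₂, hJ₁, hJ₂] at hlen
    linarith
  have hpos : (0 : ℝ) < 3 ^ i := by positivity
  simp only [ivl, mem_Ico, hI₁, hI₂, hJ₁, hJ₂] at hxI hxJ
  have hle : n < n' + 1 := by
    exact_mod_cast lt_of_mul_lt_mul_left (hxI.1.trans_lt hxJ.2) hpos.le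
  have hge : n' < n + 1 := by
    exact_mod_cast lt_of_mul_lt_mul_left (hxJ.1.trans_lt hxI.2) hpos.le
  obtain rfl : n = n' := by lia
  exact Prod.ext (hI₁.trans hJ₁.symm) (hI₂.trans hJ₂.symm)

lemma measureReal_ivl_eq_pow_mul (hJ : IsTriadic J) {μ : Measure ℝ}
    [IsLocallyFiniteMeasure μ] {d : ℕ} {v : ℝ}
    (hv : ∀ I, IsTriadic I → len I = len J / 3 ^ d → ivl I ⊆ ivl J → μ.real (ivl I) = v) :
    μ.real (ivl J) = 3 ^ d * v := by
  obtain ⟨j, n, h₁, h₂⟩ := hJ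
  have hscale : (3 : ℝ) ^ j = 3 ^ (j - d) * 3 ^ d := by
    rw [zpow_sub₀ three_ne_zero, zpow_natCast, div_mul_cancel₀ _ (by positivity)]
  set f : ℕ → ℝ := fun i => 3 ^ (j - d) * (3 ^ d * n + i) with hf
  have hmono : Monotone f := fun a b hab => by simp only [hf]; gcongr
  have hfirst : f 0 = J.1 := by rw [h₁, hscale]; simp only [hf]; push_cast; ring
  have hlast : f (3 ^ d) = J.2 := by rw [h₂, hscale]; simp only [hf]; push_cast; ring
  have hpiece (i : ℕ) (hi : i ∈ Finset.range (3 ^ d)) : μ.real (Ico (f i) (f (i + 1))) = v := by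
    refine hv (f i, f (i + 1)) ⟨j - d, 3 ^ d * n + i, ?_, ?_⟩ ?_ (Ico_subset_Ico ?_ ?_)
    · simp only [hf]; push_cast; ring
    · simp only [hf]; push_cast; ring
    · rw [len, len, h₁, h₂, hscale, eq_div_iff (by positivity)]; simp only [hf]; push_cast; ring
    · exact hfirst ▸ hmono i.zero_le
    · exact hlast ▸ hmono (Finset.mem_range.1 hi)
  rw [ivl, ← hfirst, ← hlast, measureReal_Ico_eq_sum_range hmono, Finset.sum_congr rfl hpiece,
    Finset.sum_const, Finset.card_range, nsmul_eq_mul]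
  norm_cast

end IsTriadic

lemma countable_setOf_isTriadic : {I | IsTriadic I}.Countable := by
  refine (countable_range fun p : ℤ × ℤ => ((3 : ℝ) ^ p.1 * p.2, (3 : ℝ) ^ p.1 * (p.2 + 1))).mono ?_
  rintro I ⟨j, n, h₁, h₂⟩
  exact ⟨(j, n), Prod.ext h₁.symm h₂.symm⟩

section Families

variable {k m : ℕ} {J : ℝ × ℝ}

lemma zero_one_mem_Jfam_one (k : ℕ) : ((0 : ℝ), (1 : ℝ)) ∈ Jfam k 1 := rfl

lemma isTriadic_of_mem_Jfam {l : ℕ} (hJ : J ∈ Jfam k l) : IsTriadic J := by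
  match l, hJ with
  | 1, hJ =>
    obtain rfl : J = (0, 1) := hJ
    exact ⟨0, 0, by simp, by simp⟩
  | _ + 2, hJ => exact hJ.1

lemma len_of_mem_Jfam (hJ : J ∈ Jfam k (m + 1)) : len J = ((3 : ℝ) ^ k)⁻¹ ^ m := by
  induction m generalizing J with
  | zero =>
    obtain rfl : J = (0, 1) := hJ
    simp [len]
  | succ m ih =>
    obtain ⟨-, J', hJ', hlen, -⟩ := hJ
    rw [hlen, ih hJ', pow_succ, div_eq_mul_inv]

lemma eq_of_mem_Jfam_of_mem_ivl {J' : ℝ × ℝ} (hJ : J ∈ Jfam k (m + 1)) (hJ' : J' ∈ Jfam k (m + 1))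
    {x : ℝ} (hx₁ : x ∈ ivl J) (hx₂ : x ∈ ivl J') : J = J' :=
  (isTriadic_of_mem_Jfam hJ).eq_of_mem_ivl (isTriadic_of_mem_Jfam hJ')
    ((len_of_mem_Jfam hJ).trans (len_of_mem_Jfam hJ').symm) hx₁ hx₂

/-- The union of the intervals of `𝒥_{m+1}`. The index is shifted because `𝒥_0` is empty: the sets
`Jset k 0 = [0, 1) ⊇ Jset k 1 ⊇ ⋯` are nested. -/
def Jset (k m : ℕ) : Set ℝ := ⋃ J ∈ Jfam k (m + 1), ivl J

lemma ivl_subset_Jset (hJ : J ∈ Jfam k (m + 1)) : ivl J ⊆ Jset k m :=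
  subset_biUnion_of_mem (u := ivl) hJ

lemma Jset_zero (k : ℕ) : Jset k 0 = Ico 0 1 := by simp [Jset, Jfam, ivl]

lemma ivl_mid_subset_of_mem_Jfam {l : ℕ} (hJ : J ∈ Jfam k l) : ivl (mid J) ⊆ ivl J :=
  ivl_mid_subset (isTriadic_of_mem_Jfam hJ).len_pos.le

lemma Jset_antitone (k : ℕ) : Antitone (Jset k) :=
  antitone_nat_of_succ_le fun _ => iUnion₂_subset fun _ ⟨_, _, hJ', _, hsub⟩ =>
    (hsub.trans (ivl_mid_subset_of_mem_Jfam hJ')).trans (ivl_subset_Jset hJ')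

lemma ivl_inter_Jset_succ_subset (hJ : J ∈ Jfam k (m + 1)) :
    ivl J ∩ Jset k (m + 1) ⊆ ivl (mid J) := by
  rintro x ⟨hxJ, hx⟩
  obtain ⟨J'', ⟨-, J', hJ', -, hsub⟩, hxJ''⟩ := mem_iUnion₂.1 hx
  obtain rfl : J = J' :=
    eq_of_mem_Jfam_of_mem_ivl hJ hJ' hxJ (ivl_mid_subset_of_mem_Jfam hJ' (hsub hxJ''))
  exact hsub hxJ''

lemma measurableSet_Omega (k : ℕ) (P : ℝ × ℝ → ℝ × ℝ) (l : ℕ) : MeasurableSet (Omega k P l) :=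
  .biUnion ((countable_setOf_isTriadic.mono fun _ => isTriadic_of_mem_Jfam).image P)
    fun I _ => measurableSet_ivl I

lemma ivl_apply_subset_Omega (P : ℝ × ℝ → ℝ × ℝ) {l : ℕ} (hJ : J ∈ Jfam k l) :
    ivl (P J) ⊆ Omega k P l :=
  subset_biUnion_of_mem (u := ivl) (mem_image_of_mem P hJ)

end Families

lemma alpha_pow_mul_inv_pow (k n : ℕ) :
    alpha k ^ n * ((3 : ℝ) ^ k)⁻¹ ^ n = ((3 : ℝ) ^ (k - 1) + 1)⁻¹ ^ n := by
  rw [← mul_pow, alpha, div_mul_eq_mul_div, mul_inv_cancel₀ (by positivity), one_div]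

namespace GoodP

variable {k l m : ℕ} {P : ℝ × ℝ → ℝ × ℝ} {J : ℝ × ℝ}

lemma ne_zero (hP : GoodP k P) : k ≠ 0 := by
  rintro rfl
  have hunit : IsTriadic ((0 : ℝ), (1 : ℝ)) := isTriadic_of_mem_Jfam (zero_one_mem_Jfam_one 0)
  obtain ⟨htri, hlen, hadj⟩ := hP (0, 1) hunit Subset.rfl
  rw [pow_zero, div_one] at hlen
  have eq_of_mem {x : ℝ} (hxP : x ∈ ivl (P (0, 1))) (hx : x ∈ ivl (0, 1)) : P (0, 1) = (0, 1) :=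
    htri.eq_of_mem_ivl hunit hlen hxP hx
  have hlen' : (P (0, 1)).2 - (P (0, 1)).1 = 1 := by simpa [len] using hlen
  rcases hadj with hadj | hadj
  · have hright : (P (0, 1)).2 = 1 / 3 := by rw [hadj]; norm_num [mid]
    have := eq_of_mem (x := 0) ⟨by linarith, by linarith⟩ ⟨le_rfl, one_pos⟩
    norm_num [this] at hright
  · have hleft : (P (0, 1)).1 = 2 / 3 := by rw [hadj]; norm_num [mid]
    have := eq_of_mem (x := 2 / 3) ⟨by linarith, by linarith⟩ ⟨by norm_num, by norm_num⟩
    norm_num [this] at hleft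

lemma len_apply_and_adjacent (hP : GoodP k P) (hJ : J ∈ Jfam k (m + 1)) :
    len (P J) = len J / 3 ^ k ∧ ((P J).2 = (mid J).1 ∨ (P J).1 = (mid J).2) :=
  (hP J (isTriadic_of_mem_Jfam hJ)
    ((ivl_subset_Jset hJ).trans (Jset_zero k ▸ Jset_antitone k m.zero_le))).2

lemma volume_real_ivl_apply (hP : GoodP k P) (hJ : J ∈ Jfam k (m + 1)) :
    volume.real (ivl (P J)) = ((3 : ℝ) ^ k)⁻¹ ^ (m + 1) := by
  have hlen : len (P J) = ((3 : ℝ) ^ k)⁻¹ ^ (m + 1) := by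
    rw [(hP.len_apply_and_adjacent hJ).1, len_of_mem_Jfam hJ, pow_succ, div_eq_mul_inv]
  rw [volume_real_ivl (hlen ▸ by positivity), hlen]

lemma ivl_apply_subset_sdiff (hP : GoodP k P) (hJ : J ∈ Jfam k (m + 1)) :
    ivl (P J) ⊆ ivl J \ Jset k (m + 1) := by
  obtain ⟨hlen, hadj⟩ := hP.len_apply_and_adjacent hJ
  have hthird : len (P J) ≤ len J / 3 := by
    rw [hlen]
    exact div_le_div_of_nonneg_left (isTriadic_of_mem_Jfam hJ).len_pos.le three_pos
      (le_self_pow₀ (by norm_num) hP.ne_zero)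
  intro x hx
  obtain ⟨hxJ, hxmid⟩ := ivl_subset_sdiff_ivl_mid hthird hadj hx
  exact ⟨hxJ, fun hxS => hxmid (ivl_inter_Jset_succ_subset hJ ⟨hxJ, hxS⟩)⟩

lemma Omega_subset_sdiff (hP : GoodP k P) (m : ℕ) :
    Omega k P (m + 1) ⊆ Jset k m \ Jset k (m + 1) := by
  refine iUnion₂_subset ?_
  rintro _ ⟨J, hJ, rfl⟩
  exact (hP.ivl_apply_subset_sdiff hJ).trans (sdiff_subset_sdiff_left (ivl_subset_Jset hJ))

lemma disjoint_Omega_Jset (hP : GoodP k P) (hlm : l < m) :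
    Disjoint (Omega k P (l + 1)) (Jset k m) :=
  (disjoint_sdiff_left.mono_left (hP.Omega_subset_sdiff l)).mono_right (Jset_antitone k hlm)

lemma pairwise_disjoint_Omega (hP : GoodP k P) :
    Pairwise fun l m => Disjoint (Omega k P (l + 1)) (Omega k P (m + 1)) :=
  (pairwise_disjoint_on _).2 fun _ m hlm =>
    (hP.disjoint_Omega_Jset hlm).mono_right ((hP.Omega_subset_sdiff m).trans sdiff_subset)

lemma Omega_inter_ivl (hP : GoodP k P) (hJ : J ∈ Jfam k (m + 1)) :
    Omega k P (m + 1) ∩ ivl J = ivl (P J) := by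
  refine Subset.antisymm ?_ (subset_inter (ivl_apply_subset_Omega P hJ)
    ((hP.ivl_apply_subset_sdiff hJ).trans sdiff_subset))
  rintro x ⟨hxΩ, hxJ⟩
  obtain ⟨_, ⟨J', hJ', rfl⟩, hxP⟩ := mem_iUnion₂.1 hxΩ
  obtain rfl : J = J' :=
    eq_of_mem_Jfam_of_mem_ivl hJ hJ' hxJ (hP.ivl_apply_subset_sdiff hJ' hxP).1
  exact hxP

lemma Omega_inter_ivl_eq_inter_ivl_mid (hP : GoodP k P) (hJ : J ∈ Jfam k (m + 1))
    (hml : m < l) : Omega k P (l + 1) ∩ ivl J = Omega k P (l + 1) ∩ ivl (mid J) := by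
  refine Subset.antisymm (fun x hx => ⟨hx.1, ivl_inter_Jset_succ_subset hJ ⟨hx.2, ?_⟩⟩)
    (inter_subset_inter_right _ (ivl_mid_subset_of_mem_Jfam hJ))
  exact Jset_antitone k hml (hP.Omega_subset_sdiff l hx.1).1

lemma volume_real_Omega_inter_ivl (hP : GoodP k P) (j : ℕ) (hJ : J ∈ Jfam k (m + 1)) :
    volume.real (Omega k P (j + m + 1) ∩ ivl J) =
      (3 ^ (k - 1)) ^ j * ((3 : ℝ) ^ k)⁻¹ ^ (j + m + 1) := by
  induction j generalizing m J with
  | zero =>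
    simp only [zero_add, hP.Omega_inter_ivl hJ, hP.volume_real_ivl_apply hJ, pow_zero, one_mul]
  | succ j ih =>
    rw [hP.Omega_inter_ivl_eq_inter_ivl_mid hJ (by lia), inter_comm,
      ← measureReal_restrict_apply (measurableSet_ivl _), pow_succ', mul_assoc]
    refine (isTriadic_of_mem_Jfam hJ).mid.measureReal_ivl_eq_pow_mul
      fun I hI hlen hsub => ?_
    have hmem : I ∈ Jfam k (m + 1 + 1) := by
      refine ⟨hI, J, hJ, ?_, hsub⟩
      rw [hlen, len_mid, div_div, mul_pow_sub_one hP.ne_zero]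
    rw [measureReal_restrict_apply (measurableSet_ivl _), inter_comm, Nat.succ_add_eq_add_succ,
      ih hmem]

theorem setIntegral_wk_ivl_of_mem_Jfam (hP : GoodP k P) (hJ : J ∈ Jfam k (m + 1)) :
    ∫ x in ivl J, wk k P x = ((3 : ℝ) ^ (k - 1) + 1)⁻¹ ^ m := by
  refine setIntegral_tsum_const_mul_indicator_one (volume_ivl_ne_top J)
    (fun l => measurableSet_Omega k P (l + 1)) ?_
  have hbefore (l : ℕ) (hl : l ∈ Finset.range m) :
      alpha k ^ (l + 1) * volume.real (Omega k P (l + 1) ∩ ivl J) = 0 := by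
    rw [((hP.disjoint_Omega_Jset (Finset.mem_range.1 hl)).mono_right
      (ivl_subset_Jset hJ)).inter_eq, measureReal_empty, mul_zero]
  have hafter (j : ℕ) :
      alpha k ^ (j + m + 1) * volume.real (Omega k P (j + m + 1) ∩ ivl J) =
        ((3 : ℝ) ^ (k - 1) + 1)⁻¹ ^ (j + m + 1) * (3 ^ (k - 1)) ^ j := by
    rw [hP.volume_real_Omega_inter_ivl j hJ, mul_left_comm, alpha_pow_mul_inv_pow, mul_comm]
  rw [← hasSum_nat_add_iff' m, Finset.sum_eq_zero hbefore, sub_zero]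
  simpa only [hafter] using hasSum_inv_add_one_pow_mul_pow (by positivity) m

theorem setIntegral_wk_ivl_apply (hP : GoodP k P) (hJ : J ∈ Jfam k (m + 1)) :
    ∫ x in ivl (P J), wk k P x = ((3 : ℝ) ^ (k - 1) + 1)⁻¹ ^ (m + 1) := by
  refine setIntegral_tsum_const_mul_indicator_one (volume_ivl_ne_top (P J))
    (fun l => measurableSet_Omega k P (l + 1)) ?_
  have hother (l : ℕ) (hl : l ≠ m) :
      alpha k ^ (l + 1) * volume.real (Omega k P (l + 1) ∩ ivl (P J)) = 0 := by
    rw [((hP.pairwise_disjoint_Omega hl).mono_right (ivl_apply_subset_Omega P hJ)).inter_eq,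
      measureReal_empty, mul_zero]
  have hsame : alpha k ^ (m + 1) * volume.real (Omega k P (m + 1) ∩ ivl (P J)) =
      ((3 : ℝ) ^ (k - 1) + 1)⁻¹ ^ (m + 1) := by
    rw [inter_eq_right.2 (ivl_apply_subset_Omega P hJ), hP.volume_real_ivl_apply hJ,
      alpha_pow_mul_inv_pow]
  exact hsame ▸ hasSum_single m hother

end GoodP

theorem statement2_general (k : ℕ) (P : ℝ × ℝ → ℝ × ℝ) (hP : GoodP k P) :
    (∫ x in Icc (0:ℝ) 1, wk k P x) = 1 ∧
      ∀ l : ℕ, 1 ≤ l → ∀ I ∈ Ifam k P l, ∀ J ∈ Jfam k (l + 1),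
        (∫ x in ivl I, wk k P x) = ∫ x in ivl J, wk k P x := by
  constructor
  · rw [integral_Icc_eq_integral_Ico]
    exact hP.setIntegral_wk_ivl_of_mem_Jfam (zero_one_mem_Jfam_one k)
  · rintro l hl _ ⟨J', hJ', rfl⟩ J hJ
    obtain ⟨m, rfl⟩ := Nat.exists_eq_add_of_le' hl
    rw [hP.setIntegral_wk_ivl_apply hJ', hP.setIntegral_wk_ivl_of_mem_Jfam hJ]

/-- The weight `w_k = ∑_{l≥1} (3^k/(3^{k-1}+1))^l χ_{Ω_l}`
satisfies `∫_{[0,1]} w_k = 1` and `∫_I w_k = ∫_J w_k` for every `l ≥ 1`,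
`I ∈ ℐ_l` and `J ∈ 𝒥_{l+1}`. -/
theorem statement2 (k : ℕ) (hk : 2 ≤ k) (P : ℝ × ℝ → ℝ × ℝ) (hP : GoodP k P) :
    (∫ x in Icc (0:ℝ) 1, wk k P x) = 1 ∧
      ∀ l : ℕ, 1 ≤ l → ∀ I ∈ Ifam k P l, ∀ J ∈ Jfam k (l + 1),
        (∫ x in ivl I, wk k P x) = ∫ x in ivl J, wk k P x :=
  statement2_general k P hP

end RT

end
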